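/- arXiv:math/9803047 — 3 statements merged into one kernel-verified Lean document; each statement's English description precedes it below -/
import Mathlib

section
/- Let α ∈ ℝ with 0 ≤ α ≤ 1. Then α is an accumulation point of S (i.e., for every ε > 0 there exists s ∈ S with s ≠ α and |s - α| < ε) if and only if α = 1 or α = m/(m+1) for some positive integer m. -/
open Matrix

structure ResolutionDatum (r : ℕ) where
  M : Matrix (Fin r) (Fin r) ℤ
  p : Fin r → ℕ
  symm : M.IsSymm
  negdef : ∀ x : Fin r → ℝ, x ≠ 0 → x ⬝ᵥ ((M.map (Int.cast : ℤ → ℝ)) *ᵥ x) < 0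
  offdiag_nonneg : ∀ i j : Fin r, i ≠ j → 0 ≤ M i j
  diag_le_neg_two : ∀ i : Fin r, p i = 0 → M i i ≤ -2
  connected : (SimpleGraph.fromRel (fun i j : Fin r => 0 < M i j)).Connected

/-- The vector `c i = 2 p i - 2 - M i i` (the values `K · A_i`). -/
def ResolutionDatum.c {r : ℕ} (D : ResolutionDatum r) : Fin r → ℚ :=
  fun i => 2 * (D.p i : ℚ) - 2 - (D.M i i : ℚ)

/-- `-K² = -cᵀ M⁻¹ c`. -/
noncomputable def ResolutionDatum.negK2 {r : ℕ} (D : ResolutionDatum r) : ℚ :=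
  - (D.c ⬝ᵥ ((D.M.map (Int.cast : ℤ → ℚ))⁻¹ *ᵥ D.c))

/-- The set of all values `-K²` of normal surface singularities. -/
def negK2Set : Set ℝ :=
  { x : ℝ | ∃ (r : ℕ) (_ : 0 < r) (D : ResolutionDatum r), x = (D.negK2 : ℝ) }

section PositiveDefinite

variable {ι : Type*} [Fintype ι]

lemma dotProduct_mulVec_eq_sum (A : Matrix ι ι ℝ) (f g : ι → ℝ) :
    f ⬝ᵥ A *ᵥ g = ∑ i, ∑ j, f i * A i j * g j := by
  simp only [dotProduct, mulVec, Finset.mul_sum, mul_assoc]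

lemma dotProduct_mulVec_comm_of_isHermitian {A : Matrix ι ι ℝ} (hA : A.IsHermitian)
    (f g : ι → ℝ) : f ⬝ᵥ A *ᵥ g = g ⬝ᵥ A *ᵥ f := by
  rw [dotProduct_mulVec_eq_sum, dotProduct_mulVec_eq_sum, Finset.sum_comm]
  refine Finset.sum_congr rfl fun i _ => Finset.sum_congr rfl fun j _ => ?_
  have h : A j i = A i j := by simpa using hA.apply i j
  rw [h]
  ring

lemma quadratic_add {A : Matrix ι ι ℝ} (hA : A.IsHermitian) (f g : ι → ℝ) :
    (f + g) ⬝ᵥ A *ᵥ (f + g) = f ⬝ᵥ A *ᵥ f + 2 * (g ⬝ᵥ A *ᵥ f) + g ⬝ᵥ A *ᵥ g := by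
  rw [mulVec_add, add_dotProduct, dotProduct_add, dotProduct_add,
    dotProduct_mulVec_comm_of_isHermitian hA f g]
  ring

lemma quadratic_pos {A : Matrix ι ι ℝ} (hA : A.PosDef) {f : ι → ℝ} (hf : f ≠ 0) :
    0 < f ⬝ᵥ A *ᵥ f := by
  simpa using hA.dotProduct_mulVec_pos hf

lemma quadratic_nonneg {A : Matrix ι ι ℝ} (hA : A.PosDef) (f : ι → ℝ) :
    0 ≤ f ⬝ᵥ A *ᵥ f := by
  by_cases hf : f = 0
  · simp [hf]
  · exact (quadratic_pos hA hf).le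

/-- The value `c ⬝ᵥ A⁻¹ c` is the maximum of `2 f ⬝ᵥ c - f ⬝ᵥ A f`. -/
lemma two_mul_dotProduct_sub_le {A : Matrix ι ι ℝ} (hA : A.PosDef) {z c : ι → ℝ}
    (hz : A *ᵥ z = c) (f : ι → ℝ) : 2 * (f ⬝ᵥ c) - f ⬝ᵥ A *ᵥ f ≤ c ⬝ᵥ z := by
  have h := quadratic_nonneg hA (z + -f)
  rw [quadratic_add hA.isHermitian, hz, mulVec_neg, neg_dotProduct, neg_dotProduct,
    dotProduct_neg, dotProduct_comm z c] at h
  linarith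

/-- Cauchy–Schwarz for a positive definite form, in dual form. -/
lemma sq_dotProduct_le {A : Matrix ι ι ℝ} (hA : A.PosDef) {w e : ι → ℝ}
    (hw : A *ᵥ w = e) (f : ι → ℝ) : (f ⬝ᵥ e) ^ 2 ≤ (f ⬝ᵥ A *ᵥ f) * (w ⬝ᵥ e) := by
  have h : ∀ t : ℝ, 0 ≤ (w ⬝ᵥ e) * (t * t) + 2 * (f ⬝ᵥ e) * t + f ⬝ᵥ A *ᵥ f := by
    intro t
    have h := quadratic_nonneg hA (f + t • w)
    rw [quadratic_add hA.isHermitian, dotProduct_mulVec_comm_of_isHermitian hA.isHermitian (t • w) f,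
      mulVec_smul, hw] at h
    simp only [dotProduct_smul, smul_dotProduct, smul_eq_mul] at h
    linarith
  have := discrim_le_zero h
  unfold discrim at this
  nlinarith

/-- A symmetric matrix with nonpositive off-diagonal entries which maps some positive vector to a
positive vector is positive definite. -/
lemma posDef_of_mulVec_pos {A : Matrix ι ι ℝ} (hA : A.IsHermitian)
    (hoff : ∀ i j, i ≠ j → A i j ≤ 0) {h : ι → ℝ} (hpos : ∀ i, 0 < h i)
    (hAh : ∀ i, 0 < (A *ᵥ h) i) : A.PosDef := by
  refine PosDef.of_dotProduct_mulVec_pos hA fun x hx => ?_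
  have key : ∑ i, (x i / h i) ^ 2 * (h i * (A *ᵥ h) i) ≤ x ⬝ᵥ A *ᵥ x := by
    have e1 : ∑ i, (x i / h i) ^ 2 * (h i * (A *ᵥ h) i)
        = ∑ i, ∑ j, (x i / h i) ^ 2 * (h i * A i j * h j) := by
      simp only [mulVec, dotProduct, Finset.mul_sum, mul_assoc]
    have e2 : ∑ i, (x i / h i) ^ 2 * (h i * (A *ᵥ h) i)
        = ∑ i, ∑ j, (x j / h j) ^ 2 * (h i * A i j * h j) := by
      rw [e1, Finset.sum_comm]
      refine Finset.sum_congr rfl fun i _ => Finset.sum_congr rfl fun j _ => ?_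
      have e : A j i = A i j := by simpa using hA.apply i j
      rw [e]
      ring
    have e3 : ∑ i, (x i / h i) ^ 2 * (h i * (A *ᵥ h) i)
        = ∑ i, ∑ j, ((x i / h i) ^ 2 + (x j / h j) ^ 2) / 2 * (h i * A i j * h j) := by
      have : ∀ a b c : ℝ, a = b → a = c → a = (b + c) / 2 := by intros; linarith
      rw [this _ _ _ e1 e2, ← Finset.sum_add_distrib, Finset.sum_div]
      refine Finset.sum_congr rfl fun i _ => ?_
      rw [← Finset.sum_add_distrib, Finset.sum_div]
      refine Finset.sum_congr rfl fun j _ => ?_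
      ring
    rw [e3, dotProduct_mulVec_eq_sum]
    refine Finset.sum_le_sum fun i _ => Finset.sum_le_sum fun j _ => ?_
    have hx' : x i * A i j * x j = (x i / h i) * (x j / h j) * (h i * A i j * h j) := by
      field_simp [(hpos i).ne', (hpos j).ne']
    rw [hx']
    rcases eq_or_ne i j with rfl | hij
    · exact le_of_eq (by ring)
    · have h1 : h i * A i j * h j ≤ 0 := by
        have := mul_nonneg (mul_nonneg (hpos i).le (neg_nonneg.2 (hoff i j hij))) (hpos j).le
        linarith
      nlinarith [mul_nonneg (sq_nonneg (x i / h i - x j / h j)) (neg_nonneg.2 h1)]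
  obtain ⟨i, hi⟩ := Function.ne_iff.1 hx
  refine lt_of_lt_of_le ?_ (by simpa using key)
  refine Finset.sum_pos' (fun i _ => ?_) ⟨i, Finset.mem_univ i, ?_⟩
  · exact mul_nonneg (sq_nonneg _) (mul_nonneg (hpos i).le (hAh i).le)
  · have : x i / h i ≠ 0 := div_ne_zero hi (hpos i).ne'
    have := hpos i
    have := hAh i
    positivity

variable [DecidableEq ι]

/-- The matrix which agrees with `A` on the principal block `s` and with the identity outside. -/
def principalBlock (A : Matrix ι ι ℝ) (s : Finset ι) : Matrix ι ι ℝ :=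
  of fun i j => if i ∈ s ∧ j ∈ s then A i j else if i = j then 1 else 0

lemma quadratic_principalBlock (A : Matrix ι ι ℝ) (s : Finset ι) (x : ι → ℝ) :
    x ⬝ᵥ principalBlock A s *ᵥ x
      = (s.piecewise x 0) ⬝ᵥ A *ᵥ (s.piecewise x 0) + ∑ i ∈ sᶜ, x i ^ 2 := by
  have h : ∑ i ∈ sᶜ, x i ^ 2 = ∑ i, ∑ j, if i = j then (if i ∈ s then 0 else x i ^ 2) else 0 := by
    simp only [Finset.sum_ite_eq, Finset.mem_univ, if_true]
    rw [Finset.sum_ite, Finset.sum_const_zero, zero_add]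
    exact Finset.sum_congr (by ext; simp) fun _ _ => rfl
  rw [h, dotProduct_mulVec_eq_sum, dotProduct_mulVec_eq_sum, ← Finset.sum_add_distrib]
  refine Finset.sum_congr rfl fun i _ => ?_
  rw [← Finset.sum_add_distrib]
  refine Finset.sum_congr rfl fun j _ => ?_
  by_cases hi : i ∈ s <;> by_cases hj : j ∈ s <;> by_cases hij : i = j <;>
    (simp_all [principalBlock, Finset.piecewise]; try ring)

lemma principalBlock_posDef {A : Matrix ι ι ℝ} (hA : A.PosDef) (s : Finset ι) :
    (principalBlock A s).PosDef := by
  refine PosDef.of_dotProduct_mulVec_pos ?_ fun x hx => ?_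
  · ext i j
    have e : A j i = A i j := by simpa using hA.isHermitian.apply i j
    simp only [principalBlock, conjTranspose_apply, of_apply, star_trivial, e, eq_comm (a := j),
      and_comm (a := j ∈ s)]
  · rw [star_trivial, quadratic_principalBlock]
    by_cases h : s.piecewise x 0 = 0
    · obtain ⟨i, hi⟩ := Function.ne_iff.1 hx
      have his : i ∉ s := fun his => hi (by simpa [his] using congrFun h i)
      refine add_pos_of_nonneg_of_pos (quadratic_nonneg hA _) ?_
      refine Finset.sum_pos' (fun _ _ => sq_nonneg _) ⟨i, by simpa using his, ?_⟩
      have : x i ≠ 0 := hi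
      positivity
    · exact add_pos_of_pos_of_nonneg (quadratic_pos hA h) (Finset.sum_nonneg fun _ _ => sq_nonneg _)

lemma adjugate_principalBlock_insert (A : Matrix ι ι ℝ) {s : Finset ι} {u : ι} (hu : u ∉ s) :
    (principalBlock A (insert u s)).adjugate u u = (principalBlock A s).det := by
  set B := (principalBlock A (insert u s)).updateRow u (Pi.single u 1) with hB
  have h1 : B.adjugate u u = (principalBlock A (insert u s)).adjugate u u := by
    rw [adjugate_apply, adjugate_apply, hB, updateRow_idem]
  have h2 : Bᵀ.updateRow u (Pi.single u 1) = (principalBlock A s)ᵀ := by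
    ext i j
    by_cases hi : i = u <;> by_cases hj : j = u <;>
      simp_all [principalBlock, updateRow_apply, Pi.single_apply, eq_comm]
  rw [← h1, ← transpose_apply B.adjugate, adjugate_transpose, adjugate_apply, h2, det_transpose]

/-- Enlarging a principal block by one index multiplies its determinant by at most the value of the
form at any vector of the larger block whose new coordinate is `1`. -/
lemma det_principalBlock_insert_le {A : Matrix ι ι ℝ} (hA : A.PosDef) {s : Finset ι} {u : ι}
    (hu : u ∉ s) {f : ι → ℝ} (hfs : ∀ i ∉ insert u s, f i = 0) (hfu : f u = 1) :
    (principalBlock A (insert u s)).det ≤ (f ⬝ᵥ A *ᵥ f) * (principalBlock A s).det := by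
  have hB := principalBlock_posDef hA (insert u s)
  have hdet := hB.det_pos
  set B := principalBlock A (insert u s) with hBdef
  have hw : B *ᵥ (B⁻¹ *ᵥ Pi.single u 1) = Pi.single u 1 := by
    rw [mulVec_mulVec, mul_nonsing_inv _ hdet.ne'.isUnit, one_mulVec]
  have h := sq_dotProduct_le hB hw f
  have hff : f ⬝ᵥ B *ᵥ f = f ⬝ᵥ A *ᵥ f := by
    have hp : (insert u s).piecewise f 0 = f := by
      ext i
      by_cases hi : i ∈ insert u s
      · rw [Finset.piecewise_eq_of_mem _ _ _ hi]
      · rw [Finset.piecewise_eq_of_notMem _ _ _ hi, hfs i hi, Pi.zero_apply]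
    rw [hBdef, quadratic_principalBlock, hp, Finset.sum_eq_zero, add_zero]
    intro i hi
    rw [hfs i (by simpa using hi)]
    norm_num
  rw [hff, dotProduct_single, dotProduct_single, hfu, mulVec_single_one, col_apply, inv_def,
    Matrix.smul_apply, adjugate_principalBlock_insert A hu, Ring.inverse_eq_inv', smul_eq_mul] at h
  have h' := mul_le_mul_of_nonneg_left h hdet.le
  field_simp at h'
  linarith

end PositiveDefinite

section SimplyLaced

variable {ι : Type*} [Fintype ι] [DecidableEq ι]

lemma single_dotProduct_mulVec_single (A : Matrix ι ι ℝ) (i j : ι) (a b : ℝ) :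
    (Pi.single i a : ι → ℝ) ⬝ᵥ A *ᵥ Pi.single j b = a * A i j * b := by
  rw [single_dotProduct, mulVec, dotProduct_single, mul_assoc]

/-- Attaching a vertex of weight `2` to a vertex where a nonnegative vector is at least `1`
does not increase the value of the form. -/
lemma quadratic_add_single_le {A : Matrix ι ι ℝ} (hA : A.IsHermitian) {u y : ι}
    (hdiag : A u u = 2) (hoff : ∀ j, u ≠ j → A u j ≤ 0) (hy : A u y ≤ -1)
    {f : ι → ℝ} (hf : ∀ i, 0 ≤ f i) (hfu : f u = 0) (hfy : 1 ≤ f y) :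
    (f + Pi.single u 1) ⬝ᵥ A *ᵥ (f + Pi.single u 1) ≤ f ⬝ᵥ A *ᵥ f := by
  have hsum : (A *ᵥ f) u ≤ A u y * f y := by
    have h := Finset.sum_le_sum_of_subset_of_nonpos' (f := fun j => A u j * f j)
      (Finset.subset_univ {y}) fun j _ _ => ?_
    · simpa [mulVec, dotProduct] using h
    · rcases eq_or_ne u j with rfl | hj
      · simp [hfu]
      · exact mul_nonpos_of_nonpos_of_nonneg (hoff j hj) (hf j)
  rw [quadratic_add hA, single_dotProduct_mulVec_single, hdiag, single_dotProduct]
  nlinarith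

/-- A matrix of the form `2 - adjacency` for a connected multigraph, which is positive definite. -/
structure IsCartan (C : Matrix ι ι ℤ) : Prop where
  symm : C.IsSymm
  diag : ∀ i, C i i = 2
  offdiag : ∀ i j, i ≠ j → C i j ≤ 0
  posDef : (C.map (Int.cast : ℤ → ℝ)).PosDef
  conn : ∀ s : Finset ι, s.Nonempty → (∀ i ∈ s, ∀ j, i ≠ j → C i j ≠ 0 → j ∈ s) →
    s = Finset.univ

namespace IsCartan

variable {C : Matrix ι ι ℤ}

/-- The vertices adjacent to `i`. -/
def nbrs (C : Matrix ι ι ℤ) (i : ι) : Finset ι :=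
  Finset.univ.filter fun j => i ≠ j ∧ C i j ≠ 0

lemma mem_nbrs {i j : ι} : j ∈ nbrs C i ↔ i ≠ j ∧ C i j ≠ 0 := by
  simp [nbrs]

lemma mem_nbrs_comm (hC : IsCartan C) {i j : ι} : j ∈ nbrs C i ↔ i ∈ nbrs C j := by
  rw [mem_nbrs, mem_nbrs, hC.symm.apply i j, ne_comm]

lemma eq_neg_one_of_mem_nbrs (hC : IsCartan C) {i j : ι} (h : j ∈ nbrs C i) : C i j = -1 := by
  obtain ⟨hij, h0⟩ := mem_nbrs.1 h
  have hle := hC.offdiag i j hij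
  have hne : (Pi.single i 1 + Pi.single j 1 : ι → ℝ) ≠ 0 := by
    refine Function.ne_iff.2 ⟨i, ?_⟩
    simp [hij]
  have hpos := quadratic_pos hC.posDef hne
  rw [quadratic_add hC.posDef.isHermitian] at hpos
  simp only [single_dotProduct_mulVec_single, map_apply, hC.diag] at hpos
  have : (-2 : ℝ) < C j i := by push_cast at hpos; linarith
  have h2 : -2 < C j i := by exact_mod_cast this
  have := hC.symm.apply i j
  omega

lemma mulVec_apply_eq (hC : IsCartan C) (w : ι → ℝ) (i : ι) :
    (C.map (Int.cast : ℤ → ℝ) *ᵥ w) i = 2 * w i - ∑ j ∈ nbrs C i, w j := by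
  have h : ∀ j, (C i j : ℝ) * w j
      = (if i = j then 2 * w i else 0) - (if j ∈ nbrs C i then w j else 0) := by
    intro j
    by_cases hj : j ∈ nbrs C i
    · have hij := (mem_nbrs.1 hj).1
      simp [hj, hij, hC.eq_neg_one_of_mem_nbrs hj]
    · rcases eq_or_ne i j with rfl | hij
      · simp [hj, hC.diag]
      · have : C i j = 0 := by
          by_contra h0
          exact hj (mem_nbrs.2 ⟨hij, h0⟩)
        simp [hj, hij, this]
  simp only [mulVec, dotProduct, map_apply, h, Finset.sum_sub_distrib]
  simp

lemma det_principalBlock_insert_le_two_mul (hC : IsCartan C) {s : Finset ι} {u : ι} (hu : u ∉ s) :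
    (principalBlock (C.map (Int.cast : ℤ → ℝ)) (insert u s)).det
      ≤ 2 * (principalBlock (C.map (Int.cast : ℤ → ℝ)) s).det := by
  have h := det_principalBlock_insert_le hC.posDef hu (f := Pi.single u 1)
    (fun i hi => Pi.single_eq_of_ne (by rintro rfl; simp at hi) _) (by simp)
  rw [single_dotProduct_mulVec_single] at h
  simpa [hC.diag] using h

/-- A vertex with three neighbours bounds the determinant independently of the size. -/
lemma det_le_of_branch (hC : IsCartan C) {x a b c : ι} (ha : a ∈ nbrs C x) (hb : b ∈ nbrs C x)
    (hc : c ∈ nbrs C x) (hab : a ≠ b) (hac : a ≠ c) (hbc : b ≠ c) : C.det ≤ 16 := by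
  set A : Matrix ι ι ℝ := C.map (Int.cast : ℤ → ℝ) with hA
  have hAoff : ∀ i j, i ≠ j → A i j ≤ 0 := fun i j hij => by
    simpa [hA] using hC.offdiag i j hij
  have hAdiag : ∀ i, A i i = 2 := fun i => by simp [hA, hC.diag]
  have hAadj : ∀ i j, j ∈ nbrs C i → A i j = -1 := fun i j h => by
    simp [hA, hC.eq_neg_one_of_mem_nbrs h]
  have leg : ∀ a b c : ι, a ∈ nbrs C x → b ∈ nbrs C x → c ∈ nbrs C x → a ≠ b → a ≠ c → b ≠ c →
      ∃ f : ι → ℝ, (∀ i, 0 ≤ f i) ∧ (∀ i, i ≠ x → i ≠ a → i ≠ b → i ≠ c → f i = 0) ∧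
        1 ≤ f x ∧ 1 ≤ f a ∧ f ⬝ᵥ A *ᵥ f ≤ 1 := by
    intro a b c ha hb hc hab hac hbc
    have hxa := (mem_nbrs.1 ha).1
    have hxb := (mem_nbrs.1 hb).1
    have hxc := (mem_nbrs.1 hc).1
    refine ⟨Pi.single x 1 + Pi.single a 1 + Pi.single b (1 / 2) + Pi.single c (1 / 2),
      fun i => ?_, fun i h1 h2 h3 h4 => ?_, ?_, ?_, ?_⟩
    · simp only [Pi.add_apply, Pi.single_apply]
      split_ifs <;> norm_num
    · simp [h1, h2, h3, h4]
    · simp [hxa, hxb, hxc]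
    · simp [hxa.symm, hab, hac]
    · simp only [mulVec_add, dotProduct_add, add_dotProduct, single_dotProduct_mulVec_single,
        hAdiag, hAadj _ _ ha, hAadj _ _ hb, hAadj _ _ hc, hAadj _ _ (hC.mem_nbrs_comm.1 ha),
        hAadj _ _ (hC.mem_nbrs_comm.1 hb), hAadj _ _ (hC.mem_nbrs_comm.1 hc)]
      linarith [hAoff _ _ hab, hAoff _ _ hac, hAoff _ _ hbc, hAoff _ _ hab.symm,
        hAoff _ _ hac.symm, hAoff _ _ hbc.symm]
  let P : Finset ι → Prop := fun s => s.Nonempty ∧ (principalBlock A s).det ≤ 16 ∧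
    ∀ y ∈ s, ∃ f : ι → ℝ, (∀ i, 0 ≤ f i) ∧ (∀ i ∉ s, f i = 0) ∧ 1 ≤ f y ∧ f ⬝ᵥ A *ᵥ f ≤ 1
  have hxa := (mem_nbrs.1 ha).1
  have hxb := (mem_nbrs.1 hb).1
  have hxc := (mem_nbrs.1 hc).1
  have hP0 : P {x, a, b, c} := by
    refine ⟨⟨x, by simp⟩, ?_, fun y hy => ?_⟩
    · have h1 := hC.det_principalBlock_insert_le_two_mul (s := {a, b, c}) (u := x) (by simp [*])
      have h2 := hC.det_principalBlock_insert_le_two_mul (s := {b, c}) (u := a) (by simp [*])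
      have h3 := hC.det_principalBlock_insert_le_two_mul (s := {c}) (u := b) (by simp [*])
      have h4 := hC.det_principalBlock_insert_le_two_mul (s := ∅) (u := c) (by simp)
      have h5 : (principalBlock A ∅).det = 1 := by
        have : principalBlock A ∅ = 1 := by
          ext i j
          simp [principalBlock, Matrix.one_apply]
        rw [this, det_one]
      rw [insert_empty_eq] at h4
      linarith
    · have hs : ∀ i, i ∉ ({x, a, b, c} : Finset ι) → i ≠ x ∧ i ≠ a ∧ i ≠ b ∧ i ≠ c := by
        intro i hi
        simpa using hi
      simp only [Finset.mem_insert, Finset.mem_singleton] at hy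
      rcases hy with rfl | rfl | rfl | rfl
      · obtain ⟨f, h1, h2, h3, -, h4⟩ := leg a b c ha hb hc hab hac hbc
        exact ⟨f, h1, fun i hi => by obtain ⟨_, _, _, _⟩ := hs i hi; apply h2 <;> assumption, h3, h4⟩
      · obtain ⟨f, h1, h2, -, h3, h4⟩ := leg _ b c ha hb hc hab hac hbc
        exact ⟨f, h1, fun i hi => by obtain ⟨_, _, _, _⟩ := hs i hi; apply h2 <;> assumption, h3, h4⟩
      · obtain ⟨f, h1, h2, -, h3, h4⟩ := leg _ a c hb ha hc hab.symm hbc hac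
        exact ⟨f, h1, fun i hi => by obtain ⟨_, _, _, _⟩ := hs i hi; apply h2 <;> assumption, h3, h4⟩
      · obtain ⟨f, h1, h2, -, h3, h4⟩ := leg _ a b hc ha hb hac.symm hbc.symm hab
        exact ⟨f, h1, fun i hi => by obtain ⟨_, _, _, _⟩ := hs i hi; apply h2 <;> assumption, h3, h4⟩
  obtain ⟨s, hs⟩ := (Set.toFinite {s | P s}).exists_maximal ⟨_, hP0⟩
  obtain ⟨hsne, hdet, hleg⟩ := hs.prop
  have huniv : s = Finset.univ := by
    refine hC.conn s hsne fun y hy u hyu hCyu => ?_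
    by_contra hu
    obtain ⟨f, h1, h2, h3, h4⟩ := hleg y hy
    have hgrow := quadratic_add_single_le hC.posDef.isHermitian (hAdiag u) (fun j => hAoff u j)
      (hAadj u y (hC.mem_nbrs_comm.1 (mem_nbrs.2 ⟨hyu, hCyu⟩))).le h1 (h2 u hu) h3
    have hsupp : ∀ i ∉ insert u s, (f + Pi.single u 1 : ι → ℝ) i = 0 := by
      intro i hi
      rw [Finset.mem_insert, not_or] at hi
      simp [h2 i hi.2, hi.1]
    have hfu : (f + Pi.single u 1 : ι → ℝ) u = 1 := by simp [h2 u hu]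
    have hnew : P (insert u s) := by
      refine ⟨Finset.insert_nonempty _ _, ?_, fun z hz => ?_⟩
      · have hle := det_principalBlock_insert_le hC.posDef hu hsupp hfu
        have hpos := (principalBlock_posDef hC.posDef s).det_pos
        nlinarith
      · rcases Finset.mem_insert.1 hz with rfl | hz
        · refine ⟨_, fun i => ?_, hsupp, hfu.ge, hgrow.trans h4⟩
          have := h1 i
          simp only [Pi.add_apply, Pi.single_apply]
          split_ifs <;> linarith
        · obtain ⟨g, h1, h2, h3, h4⟩ := hleg z hz
          exact ⟨g, h1, fun i hi => h2 i fun h => hi (Finset.mem_insert_of_mem h), h3, h4⟩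
    exact hu (hs.le_of_ge hnew (Finset.subset_insert u s) (Finset.mem_insert_self u s))
  have hAuniv : principalBlock A Finset.univ = A := by
    ext i j
    simp [principalBlock]
  rw [huniv, hAuniv] at hdet
  have hcast : (C.det : ℝ) ≤ 16 := by
    rw [Int.cast_det]
    exact hdet
  exact_mod_cast hcast

lemma factorial_mul_eq_intCast_of_det_le (hC : IsCartan C) (hdet : C.det ≤ 16) {v : ι} {w : ι → ℝ}
    (hw : C.map (Int.cast : ℤ → ℝ) *ᵥ w = Pi.single v 1) :
    ∃ n : ℤ, (Nat.factorial 16 : ℝ) * w v = n := by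
  have hpos : 0 < C.det := by
    have h := hC.posDef.det_pos
    have hcast : (C.det : ℝ) = (C.map (Int.cast : ℤ → ℝ)).det := Int.cast_det C
    rw [← hcast] at h
    exact_mod_cast h
  have hdvd : C.det ∣ (Nat.factorial 16 : ℤ) := by
    obtain ⟨d, hd⟩ := Int.eq_ofNat_of_zero_le hpos.le
    rw [hd] at hpos hdet ⊢
    exact Int.natCast_dvd_natCast.2 (Nat.dvd_factorial (by omega) (by omega))
  obtain ⟨k, hk⟩ := hdvd
  have hadj : (C.det : ℝ) * w v = C.adjugate v v := by
    have h1 := congrArg (fun x => ((C.map (Int.cast : ℤ → ℝ)).adjugate *ᵥ x) v) hw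
    have h2 : (C.map (Int.cast : ℤ → ℝ)).adjugate = C.adjugate.map (Int.cast : ℤ → ℝ) :=
      ((Int.castRingHom ℝ).map_adjugate C).symm
    simp only [mulVec_mulVec, adjugate_mul, smul_mulVec, one_mulVec, mulVec_single_one,
      Pi.smul_apply, smul_eq_mul, col_apply] at h1
    rw [h2] at h1
    rw [Int.cast_det]
    exact h1
  refine ⟨k * C.adjugate v v, ?_⟩
  have hk' : (Nat.factorial 16 : ℝ) = C.det * k := by exact_mod_cast hk
  rw [hk', Int.cast_mul, ← hadj]
  ring

/-- In a graph of valency at most two the fundamental weight of `v` is maximal at `v`. -/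
lemma apply_le_apply_of_card_nbrs_le_two (hC : IsCartan C) (hdeg : ∀ i, (nbrs C i).card ≤ 2)
    {v : ι} {w : ι → ℝ}
    (hw : C.map (Int.cast : ℤ → ℝ) *ᵥ w = Pi.single v 1) (i : ι) : w i ≤ w v := by
  have hv : 0 < w v := by
    have hw0 : w ≠ 0 := by
      rintro rfl
      simpa using congrFun hw v
    simpa [hw] using quadratic_pos hC.posDef hw0
  obtain ⟨m, -, hm⟩ := Finset.exists_max_image Finset.univ w ⟨v, Finset.mem_univ v⟩
  have hall : (Finset.univ.filter fun j => w j = w m) = Finset.univ ∨ w m ≤ w v := by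
    rw [or_iff_not_imp_right, not_le]
    intro hlt
    refine hC.conn _ ⟨m, by simp⟩ fun i hi j hij hCij => ?_
    have hi : w i = w m := by simpa using hi
    have hiv : i ≠ v := by
      rintro rfl
      exact hlt.ne hi
    have hrow := congrFun hw i
    rw [hC.mulVec_apply_eq, Pi.single_eq_of_ne hiv, hi] at hrow
    have hj : j ∈ nbrs C i := mem_nbrs.2 ⟨hij, hCij⟩
    have hle : ∑ l ∈ (nbrs C i).erase j, w l ≤ ((nbrs C i).erase j).card • w m :=
      Finset.sum_le_card_nsmul _ _ _ fun l _ => hm l (Finset.mem_univ l)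
    have hcard : ((nbrs C i).erase j).card ≤ 1 := by
      rw [Finset.card_erase_of_mem hj]
      have := hdeg i
      omega
    have hcard' : (((nbrs C i).erase j).card : ℝ) ≤ 1 := by exact_mod_cast hcard
    rw [← Finset.add_sum_erase _ _ hj] at hrow
    rw [nsmul_eq_mul] at hle
    have hjm := hm j (Finset.mem_univ j)
    have : w j = w m := by nlinarith
    simpa using this
  refine (hm i (Finset.mem_univ i)).trans ?_
  rcases hall with h | h
  · have : v ∈ Finset.univ.filter fun j => w j = w m := by
      rw [h]
      exact Finset.mem_univ v
    exact (Finset.mem_filter.1 this).2.ge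
  · exact h

/-- Along an arm of a graph of valency at most two the fundamental weight of `v` decreases
linearly to zero. -/
lemma exists_natCast_mul_sub_eq (hC : IsCartan C) (hdeg : ∀ i, (nbrs C i).card ≤ 2)
    {v : ι} {w : ι → ℝ}
    (hw : C.map (Int.cast : ℤ → ℝ) *ᵥ w = Pi.single v 1) {i j : ι} (hij : j ∈ nbrs C i)
    (hlt : w j < w i) : ∃ k : ℕ, 0 < k ∧ w i = k * (w i - w j) := by
  induction hn : (Finset.univ.filter fun l => w l < w j).card using Nat.strong_induction_on
    generalizing i j with
  | _ n ih =>
  have hjv : j ≠ v := by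
    rintro rfl
    exact absurd (hC.apply_le_apply_of_card_nbrs_le_two hdeg hw i) (not_le.2 hlt)
  have hrow := congrFun hw j
  have hi := hC.mem_nbrs_comm.1 hij
  rw [hC.mulVec_apply_eq, Pi.single_eq_of_ne hjv, ← Finset.add_sum_erase _ _ hi] at hrow
  have hcard : ((nbrs C j).erase i).card ≤ 1 := by
    rw [Finset.card_erase_of_mem hi]
    have := hdeg j
    omega
  rcases Nat.le_one_iff_eq_zero_or_eq_one.1 hcard with h0 | h1
  · rw [Finset.card_eq_zero.1 h0, Finset.sum_empty] at hrow
    exact ⟨2, by norm_num, by push_cast; linarith⟩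
  · obtain ⟨l, hl⟩ := Finset.card_eq_one.1 h1
    rw [hl, Finset.sum_singleton] at hrow
    have hlj : l ∈ nbrs C j := Finset.mem_of_mem_erase (hl ▸ Finset.mem_singleton_self l)
    have hlt' : w l < w j := by linarith
    obtain ⟨k, hk, hkw⟩ := ih _ (by
      rw [← hn]
      refine Finset.card_lt_card (Finset.ssubset_iff_subset_ne.2 ⟨?_, ?_⟩)
      · intro a ha
        simp only [Finset.mem_filter, Finset.mem_univ, true_and] at ha ⊢
        exact ha.trans hlt'
      · intro h
        have : l ∈ Finset.univ.filter fun a => w a < w l := by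
          rw [h]
          simpa using hlt'
        simp at this) hlj hlt' rfl
    refine ⟨k + 1, by omega, ?_⟩
    have : w j - w l = w i - w j := by linarith
    rw [this] at hkw
    push_cast
    linarith

/-- The possible values of the diagonal entries of the inverse of a Cartan matrix. -/
lemma factorial_mul_eq_intCast_or (hC : IsCartan C) {v : ι} {w : ι → ℝ}
    (hw : C.map (Int.cast : ℤ → ℝ) *ᵥ w = Pi.single v 1) :
    (∃ n : ℤ, (Nat.factorial 16 : ℝ) * w v = n) ∨
      ∃ k l : ℕ, 0 < k ∧ 0 < l ∧ w v * (k + l) = k * l := by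
  by_cases hdeg : ∀ i, (nbrs C i).card ≤ 2
  swap
  · push Not at hdeg
    obtain ⟨x, hx⟩ := hdeg
    obtain ⟨a, ha, b, hb, c, hc, hab, hac, hbc⟩ := Finset.two_lt_card.1 hx
    exact Or.inl (hC.factorial_mul_eq_intCast_of_det_le
      (hC.det_le_of_branch ha hb hc hab hac hbc) hw)
  have hmax := hC.apply_le_apply_of_card_nbrs_le_two hdeg hw
  have hnat : ∀ k : ℕ, w v = k → ∃ n : ℤ, (Nat.factorial 16 : ℝ) * w v = n := fun k hk =>
    ⟨(Nat.factorial 16 : ℤ) * k, by rw [hk]; push_cast; rfl⟩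
  have hrow := congrFun hw v
  rw [hC.mulVec_apply_eq, Pi.single_eq_same] at hrow
  have hcases : (nbrs C v).card = 0 ∨ (nbrs C v).card = 1 ∨ (nbrs C v).card = 2 := by
    have := hdeg v
    omega
  rcases hcases with h | h | h
  · rw [Finset.card_eq_zero.1 h, Finset.sum_empty] at hrow
    exact Or.inr ⟨1, 1, one_pos, one_pos, by push_cast; linarith⟩
  · obtain ⟨a, ha⟩ := Finset.card_eq_one.1 h
    rw [ha, Finset.sum_singleton] at hrow
    have hav : a ∈ nbrs C v := by simp [ha]
    rcases (hmax a).lt_or_eq with hlt | heq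
    · obtain ⟨k, hk, hkw⟩ := hC.exists_natCast_mul_sub_eq hdeg hw hav hlt
      refine Or.inr ⟨k, 1, hk, one_pos, ?_⟩
      have : w v - w a = 1 - w v := by linarith
      rw [this] at hkw
      push_cast
      linarith
    · exact Or.inl (hnat 1 (by push_cast; linarith))
  · obtain ⟨a, b, hab, hs⟩ := Finset.card_eq_two.1 h
    rw [hs, Finset.sum_pair hab] at hrow
    have hav : a ∈ nbrs C v := by simp [hs]
    have hbv : b ∈ nbrs C v := by simp [hs]
    rcases (hmax a).lt_or_eq with hlta | heqa <;> rcases (hmax b).lt_or_eq with hltb | heqb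
    · obtain ⟨k, hk, hkw⟩ := hC.exists_natCast_mul_sub_eq hdeg hw hav hlta
      obtain ⟨l, hl, hlw⟩ := hC.exists_natCast_mul_sub_eq hdeg hw hbv hltb
      refine Or.inr ⟨k, l, hk, hl, ?_⟩
      have : w v - w b = 1 - (w v - w a) := by linarith
      rw [this] at hlw
      linear_combination (l : ℝ) * hkw + (k : ℝ) * hlw
    · obtain ⟨k, hk, hkw⟩ := hC.exists_natCast_mul_sub_eq hdeg hw hav hlta
      have : w v - w a = 1 := by linarith
      exact Or.inl (hnat k (by rw [this] at hkw; linarith))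
    · obtain ⟨k, hk, hkw⟩ := hC.exists_natCast_mul_sub_eq hdeg hw hbv hltb
      have : w v - w b = 1 := by linarith
      exact Or.inl (hnat k (by rw [this] at hkw; linarith))
    · linarith

end IsCartan

end SimplyLaced

namespace ResolutionDatum

variable {r : ℕ} (D : ResolutionDatum r)

/-- The positive definite real form `-M`. -/
noncomputable def form : Matrix (Fin r) (Fin r) ℝ := (-D.M).map (Int.cast : ℤ → ℝ)

/-- The real version of `c`. -/
noncomputable def cReal : Fin r → ℝ := fun i => (D.c i : ℝ)

lemma form_apply (i j : Fin r) : D.form i j = -(D.M i j : ℝ) := by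
  simp [form]

lemma cReal_apply (i : Fin r) : D.cReal i = 2 * (D.p i : ℝ) - 2 - D.M i i := by
  simp [cReal, c]

lemma form_eq_neg : D.form = -(D.M.map (Int.cast : ℤ → ℝ)) := by
  ext i j
  simp [form]

lemma form_posDef : D.form.PosDef := by
  refine PosDef.of_dotProduct_mulVec_pos ?_ fun x hx => ?_
  · ext i j
    simp [form_apply, D.symm.apply i j]
  · have := D.negdef x hx
    rw [form_eq_neg, neg_mulVec, dotProduct_neg, star_trivial]
    linarith

lemma det_ne_zero : D.M.det ≠ 0 := by
  intro h
  have hpos := D.form_posDef.det_pos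
  have hcast : ((-D.M).det : ℝ) = D.form.det := Int.cast_det (-D.M)
  rw [← hcast, det_neg, h] at hpos
  simp at hpos

lemma negK2_eq_dotProduct {y : Fin r → ℝ} (hy : D.form *ᵥ y = D.cReal) :
    (D.negK2 : ℝ) = D.cReal ⬝ᵥ y := by
  set z : Fin r → ℚ := (D.M.map (Int.cast : ℤ → ℚ))⁻¹ *ᵥ D.c with hz
  have hdet : IsUnit (D.M.map (Int.cast : ℤ → ℚ)).det := by
    have hcast : (D.M.det : ℚ) = (D.M.map (Int.cast : ℤ → ℚ)).det := Int.cast_det D.M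
    rw [← hcast]
    exact (Int.cast_ne_zero.2 D.det_ne_zero).isUnit
  have hMz : D.M.map (Int.cast : ℤ → ℚ) *ᵥ z = D.c := by
    rw [hz, mulVec_mulVec, mul_nonsing_inv _ hdet, one_mulVec]
  have hy' : D.form *ᵥ (fun i => -(z i : ℝ)) = D.cReal := by
    ext i
    have h := congrArg (Rat.cast : ℚ → ℝ) (congrFun hMz i)
    simp only [mulVec, dotProduct, map_apply] at h
    push_cast at h
    simp only [mulVec, dotProduct, form_apply, cReal, ← h]
    exact Finset.sum_congr rfl fun j _ => by ring
  have hyz : y = fun i => -(z i : ℝ) :=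
    mulVec_injective_of_isUnit D.form_posDef.isUnit (hy.trans hy'.symm)
  rw [negK2, ← hz, hyz]
  simp only [dotProduct, cReal]
  push_cast
  rw [← Finset.sum_neg_distrib]
  exact Finset.sum_congr rfl fun i _ => by ring

lemma exists_form_mulVec_eq : ∃ z, D.form *ᵥ z = D.cReal :=
  ⟨D.form⁻¹ *ᵥ D.cReal, by
    rw [mulVec_mulVec, mul_nonsing_inv _ D.form_posDef.det_pos.ne'.isUnit, one_mulVec]⟩

lemma two_mul_dotProduct_sub_le_negK2 (f : Fin r → ℝ) :
    2 * (f ⬝ᵥ D.cReal) - f ⬝ᵥ D.form *ᵥ f ≤ D.negK2 := by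
  obtain ⟨z, hz⟩ := D.exists_form_mulVec_eq
  rw [D.negK2_eq_dotProduct hz]
  exact two_mul_dotProduct_sub_le D.form_posDef hz f

lemma negK2_nonneg : (0 : ℝ) ≤ D.negK2 := by
  simpa using D.two_mul_dotProduct_sub_le_negK2 0

/-- A component of positive genus forces `-K² ≥ 1`. -/
lemma one_le_negK2_of_genus_ne_zero {i : Fin r} (hi : D.p i ≠ 0) : (1 : ℝ) ≤ D.negK2 := by
  have h := D.two_mul_dotProduct_sub_le_negK2 (Pi.single i 1)
  rw [single_dotProduct_mulVec_single, single_dotProduct, cReal_apply, form_apply] at h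
  have hdiag : 0 < D.form i i := D.form_posDef.diag_pos
  rw [form_apply] at hdiag
  have hM : D.M i i ≤ -1 := by
    have : (D.M i i : ℝ) < 0 := by linarith
    have : D.M i i < 0 := by exact_mod_cast this
    omega
  have hM' : (D.M i i : ℝ) ≤ -1 := by exact_mod_cast hM
  have hp : (1 : ℝ) ≤ D.p i := by exact_mod_cast Nat.one_le_iff_ne_zero.2 hi
  linarith

/-- The Cartan matrix of the dual graph, obtained by resetting all weights to `-2`. -/
def cartan : Matrix (Fin r) (Fin r) ℤ := of fun i j => if i = j then 2 else -D.M i j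

lemma cartan_symm : D.cartan.IsSymm := by
  ext i j
  simp [cartan, D.symm.apply i j, eq_comm]

lemma cartan_diag (i : Fin r) : D.cartan i i = 2 := by
  simp [cartan]

lemma cartan_of_ne {i j : Fin r} (hij : i ≠ j) : D.cartan i j = -D.M i j := by
  simp [cartan, hij]

lemma cartan_offdiag (i j : Fin r) (hij : i ≠ j) : D.cartan i j ≤ 0 := by
  rw [D.cartan_of_ne hij]
  have := D.offdiag_nonneg i j hij
  omega

lemma cartan_conn (s : Finset (Fin r)) (hs : s.Nonempty)
    (hclosed : ∀ i ∈ s, ∀ j, i ≠ j → D.cartan i j ≠ 0 → j ∈ s) : s = Finset.univ := by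
  obtain ⟨u, hu⟩ := hs
  refine Finset.eq_univ_iff_forall.2 fun y => ?_
  have h := (SimpleGraph.reachable_iff_reflTransGen u y).1 (D.connected.preconnected u y)
  induction h with
  | refl => exact hu
  | @tail i j _ hij ih =>
    rw [SimpleGraph.fromRel_adj] at hij
    refine hclosed i ih j hij.1 ?_
    rw [D.cartan_of_ne hij.1]
    rcases hij.2 with h | h
    · omega
    · rw [D.symm.apply i j] at h
      omega

lemma cartan_isHermitian : (D.cartan.map (Int.cast : ℤ → ℝ)).IsHermitian := by
  ext i j
  simp [D.cartan_symm.apply i j]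

lemma form_mulVec_apply (hp : ∀ i, D.p i = 0) (f : Fin r → ℝ) (i : Fin r) :
    (D.form *ᵥ f) i = (D.cartan.map (Int.cast : ℤ → ℝ) *ᵥ f) i + D.cReal i * f i := by
  have h : ∀ j, D.form i j * f j
      = (D.cartan i j : ℝ) * f j + if i = j then D.cReal i * f i else 0 := by
    intro j
    rcases eq_or_ne i j with rfl | hij
    · simp [form_apply, cartan_diag, cReal_apply, hp]
      ring
    · simp [form_apply, D.cartan_of_ne hij, hij]
  simp only [mulVec, dotProduct, h, Finset.sum_add_distrib]
  simp

lemma quadratic_form_eq (hp : ∀ i, D.p i = 0) (f : Fin r → ℝ) :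
    f ⬝ᵥ D.form *ᵥ f
      = f ⬝ᵥ D.cartan.map (Int.cast : ℤ → ℝ) *ᵥ f + ∑ i, D.cReal i * f i ^ 2 := by
  simp only [dotProduct, D.form_mulVec_apply hp, mul_add, Finset.sum_add_distrib]
  exact congrArg _ (Finset.sum_congr rfl fun i _ => by ring)

/-- Any two vertices lie in a set of vertices spanning at least as many edges as a tree. -/
lemma exists_finset_quadratic_le_two (u y : Fin r) :
    ∃ s : Finset (Fin r), u ∈ s ∧ y ∈ s ∧
      (fun i => if i ∈ s then (1 : ℝ) else 0) ⬝ᵥ D.cartan.map (Int.cast : ℤ → ℝ) *ᵥ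
        (fun i => if i ∈ s then (1 : ℝ) else 0) ≤ 2 := by
  classical
  set P : Fin r → Prop := fun y => ∃ s : Finset (Fin r), u ∈ s ∧ y ∈ s ∧
      (fun i => if i ∈ s then (1 : ℝ) else 0) ⬝ᵥ D.cartan.map (Int.cast : ℤ → ℝ) *ᵥ
        (fun i => if i ∈ s then (1 : ℝ) else 0) ≤ 2
  suffices h : Finset.univ.filter P = Finset.univ by
    have hy : y ∈ Finset.univ.filter P := by
      rw [h]
      exact Finset.mem_univ y
    exact (Finset.mem_filter.1 hy).2
  refine D.cartan_conn _ ⟨u, ?_⟩ fun i hi j hij hC => ?_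
  · refine Finset.mem_filter.2 ⟨Finset.mem_univ u, {u}, by simp, by simp, ?_⟩
    have hsingle : (fun i => if i ∈ ({u} : Finset (Fin r)) then (1 : ℝ) else 0)
        = Pi.single u 1 := by
      ext i
      simp [Pi.single_apply]
    rw [hsingle, single_dotProduct_mulVec_single]
    simp [cartan_diag]
  · obtain ⟨-, s, hus, his, hq⟩ := Finset.mem_filter.1 hi
    refine Finset.mem_filter.2 ⟨Finset.mem_univ j, ?_⟩
    by_cases hjs : j ∈ s
    · exact ⟨s, hus, hjs, hq⟩
    refine ⟨insert j s, Finset.mem_insert_of_mem hus, Finset.mem_insert_self j s, ?_⟩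
    have hinsert : (fun i => if i ∈ insert j s then (1 : ℝ) else 0)
        = (fun i => if i ∈ s then (1 : ℝ) else 0) + Pi.single j 1 := by
      ext l
      rcases eq_or_ne l j with rfl | hl
      · simp [hjs]
      · simp [hl]
    rw [hinsert]
    refine (quadratic_add_single_le D.cartan_isHermitian (y := i) ?_ (fun l hl => ?_) ?_
      (fun l => ?_) ?_ ?_).trans hq
    · simp [cartan_diag]
    · simpa using D.cartan_offdiag j l hl
    · have h1 := D.cartan_offdiag i j hij
      rw [← D.cartan_symm.apply i j] at h1 hC
      have h2 : D.cartan j i ≤ -1 := by omega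
      simpa using (by exact_mod_cast h2 : (D.cartan j i : ℝ) ≤ -1)
    · split_ifs <;> norm_num
    · simp [hjs]
    · simp [his]

lemma one_le_negK2_of_sum_ge_two (hp : ∀ i, D.p i = 0) {s : Finset (Fin r)}
    (hs : (fun i => if i ∈ s then (1 : ℝ) else 0) ⬝ᵥ D.cartan.map (Int.cast : ℤ → ℝ) *ᵥ
        (fun i => if i ∈ s then (1 : ℝ) else 0) ≤ 2) (hc : 2 ≤ ∑ i ∈ s, D.cReal i) :
    (1 : ℝ) ≤ D.negK2 := by
  set g : Fin r → ℝ := fun i => if i ∈ s then (1 : ℝ) else 0 with hg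
  have h := D.two_mul_dotProduct_sub_le_negK2 ((1 / 2 : ℝ) • g)
  rw [mulVec_smul, smul_dotProduct, smul_dotProduct, dotProduct_smul,
    D.quadratic_form_eq hp] at h
  have h1 : g ⬝ᵥ D.cReal = ∑ i ∈ s, D.cReal i := by
    simp [hg, dotProduct]
  have h2 : ∑ i, D.cReal i * g i ^ 2 = ∑ i ∈ s, D.cReal i := by
    simp [hg]
  rw [h1, h2] at h
  simp only [smul_eq_mul] at h
  linarith

/-- If `-K² < 1`, all components are rational and at most one of them is not a `(-2)`-curve,
and that one is a `(-3)`-curve. -/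
lemma cReal_eq_zero_or_single (h : (D.negK2 : ℝ) < 1) :
    (∀ i, D.p i = 0) ∧ (D.cReal = 0 ∨ ∃ v, D.cReal = Pi.single v 1) := by
  have hp : ∀ i, D.p i = 0 := by
    intro i
    by_contra hi
    exact absurd (D.one_le_negK2_of_genus_ne_zero hi) (not_le.2 h)
  refine ⟨hp, ?_⟩
  have hnat : ∀ i, ∃ n : ℕ, D.cReal i = n := by
    intro i
    have hM := D.diag_le_neg_two i (hp i)
    obtain ⟨n, hn⟩ := Int.eq_ofNat_of_zero_le (show 0 ≤ -2 - D.M i i by omega)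
    refine ⟨n, ?_⟩
    rw [cReal_apply, hp]
    have hn' : (-2 - D.M i i : ℝ) = n := by exact_mod_cast hn
    push_cast
    linarith
  choose n hn using hnat
  have hnonneg : ∀ i, 0 ≤ D.cReal i := fun i => by
    rw [hn]
    positivity
  rw [or_iff_not_imp_left]
  intro h0
  obtain ⟨v, hv⟩ := Function.ne_iff.1 h0
  have hv1 : 1 ≤ n v := by
    rw [Nat.one_le_iff_ne_zero]
    intro hnv
    exact hv (by simp [hn, hnv])
  have hlt : ∀ s : Finset (Fin r),
      (fun i => if i ∈ s then (1 : ℝ) else 0) ⬝ᵥ D.cartan.map (Int.cast : ℤ → ℝ) *ᵥ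
        (fun i => if i ∈ s then (1 : ℝ) else 0) ≤ 2 → ∑ i ∈ s, D.cReal i < 2 := by
    intro s hs
    by_contra hge
    exact absurd (D.one_le_negK2_of_sum_ge_two hp hs (not_lt.1 hge)) (not_le.2 h)
  refine ⟨v, funext fun u => ?_⟩
  obtain ⟨s, hvs, hus, hq⟩ := D.exists_finset_quadratic_le_two v u
  have hsum := hlt s hq
  rcases eq_or_ne u v with rfl | huv
  · have hle := Finset.single_le_sum (fun i _ => hnonneg i) hus
    have hlt2 : n u < 2 := by
      have := hle.trans_lt hsum
      rw [hn] at this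
      exact_mod_cast this
    have : n u = 1 := by omega
    simp [hn, this]
  · have hle : ∑ i ∈ ({v, u} : Finset (Fin r)), D.cReal i ≤ ∑ i ∈ s, D.cReal i :=
      Finset.sum_le_sum_of_subset_of_nonneg (by
        intro i hi
        rcases Finset.mem_insert.1 hi with rfl | hi
        · exact hvs
        · rw [Finset.mem_singleton.1 hi]
          exact hus) fun i _ _ => hnonneg i
    rw [Finset.sum_pair huv.symm] at hle
    have hlt2 : n v + n u < 2 := by
      have := hle.trans_lt hsum
      rw [hn, hn] at this
      exact_mod_cast this
    have : n u = 0 := by omega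
    simp [hn, this, huv]

/-- The values of `-K²` below `1`, through `-K² = g / (1 + g)` with `g` a diagonal entry of the
inverse of a Cartan matrix. -/
lemma negK2_div_one_sub_negK2_cases (h : (D.negK2 : ℝ) < 1) :
    (∃ n : ℤ, (Nat.factorial 16 : ℝ) * (D.negK2 / (1 - D.negK2)) = n) ∨
      ∃ k l : ℕ, 0 < k ∧ 0 < l ∧ (D.negK2 / (1 - D.negK2) : ℝ) * (k + l) = k * l := by
  obtain ⟨hp, hc⟩ := D.cReal_eq_zero_or_single h
  obtain ⟨z, hz⟩ := D.exists_form_mulVec_eq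
  have hK := D.negK2_eq_dotProduct hz
  rcases hc with hc | ⟨v, hc⟩
  · rw [hc, zero_dotProduct] at hK
    exact Or.inl ⟨0, by simp [hK]⟩
  rw [hc, single_dotProduct, one_mul] at hK
  rw [hK] at h ⊢
  have hpos : 0 < 1 - z v := by linarith
  have hsq : ∀ x : Fin r → ℝ, ∑ i, D.cReal i * x i ^ 2 = x v ^ 2 := by
    intro x
    simp [hc, Pi.single_apply]
  have hcartan : IsCartan D.cartan := by
    refine ⟨D.cartan_symm, D.cartan_diag, D.cartan_offdiag, ?_, D.cartan_conn⟩
    refine PosDef.of_dotProduct_mulVec_pos D.cartan_isHermitian fun x hx => ?_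
    have h1 := D.quadratic_form_eq hp x
    have h2 := sq_dotProduct_le D.form_posDef hz x
    have h3 := quadratic_pos D.form_posDef hx
    rw [hsq] at h1
    rw [hc, dotProduct_single, dotProduct_single, mul_one, mul_one] at h2
    rw [star_trivial]
    nlinarith
  have hw : D.cartan.map (Int.cast : ℤ → ℝ) *ᵥ ((1 - z v)⁻¹ • z) = Pi.single v 1 := by
    ext i
    have h1 := D.form_mulVec_apply hp z i
    rw [hz, hc] at h1
    rw [mulVec_smul, Pi.smul_apply, smul_eq_mul]
    rcases eq_or_ne i v with rfl | hi
    · rw [Pi.single_eq_same] at h1 ⊢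
      have : (D.cartan.map (Int.cast : ℤ → ℝ) *ᵥ z) i = 1 - z i := by linarith
      rw [this, inv_mul_cancel₀ hpos.ne']
    · rw [Pi.single_eq_of_ne hi] at h1 ⊢
      have : (D.cartan.map (Int.cast : ℤ → ℝ) *ᵥ z) i = 0 := by linarith
      rw [this, mul_zero]
  have hg : ((1 - z v)⁻¹ • z) v = z v / (1 - z v) := by
    rw [Pi.smul_apply, smul_eq_mul, inv_mul_eq_div]
  have := hcartan.factorial_mul_eq_intCast_or hw
  rwa [hg] at this

end ResolutionDatum

section Chain

/-- The intersection matrix of a chain of `a` curves of self-intersection `-2`, one of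
self-intersection `-3`, and `b` further ones of self-intersection `-2`. -/
def chainMatrix (a b : ℕ) : Matrix (Fin (a + b + 1)) (Fin (a + b + 1)) ℤ :=
  of fun i j => if i = j then (if (i : ℕ) = a then -3 else -2)
    else if (i : ℕ) + 1 = j ∨ (j : ℕ) + 1 = i then 1 else 0

lemma chainMatrix_symm (a b : ℕ) : (chainMatrix a b).IsSymm := by
  ext i j
  rcases eq_or_ne i j with rfl | hij
  · rfl
  · simp [chainMatrix, hij, hij.symm, or_comm]

lemma chainMatrix_mulVec {a b : ℕ} {Y : ℤ → ℝ} (hleft : Y (-1) = 0) (hright : Y (a + b + 1) = 0)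
    (i : Fin (a + b + 1)) :
    ((-chainMatrix a b).map (Int.cast : ℤ → ℝ) *ᵥ fun j => Y (j : ℕ)) i
      = (if (i : ℕ) = a then 3 else 2) * Y (i : ℕ) - Y ((i : ℕ) - 1) - Y ((i : ℕ) + 1) := by
  set d : ℝ := if (i : ℕ) = a then 3 else 2 with hd
  let F : ℕ → ℝ := fun j => (if (i : ℕ) = j then d * Y (i : ℕ) else 0)
    - (if j + 1 = (i : ℕ) then Y ((i : ℕ) - 1) else 0)
    - (if (i : ℕ) + 1 = j then Y ((i : ℕ) + 1) else 0)
  have hterm : ∀ j : Fin (a + b + 1),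
      ((-chainMatrix a b).map (Int.cast : ℤ → ℝ)) i j * Y (j : ℕ) = F j := by
    intro j
    simp only [F, map_apply, Matrix.neg_apply, chainMatrix, of_apply, Fin.ext_iff]
    by_cases h1 : (i : ℕ) = j
    · have h2 : ¬ (i : ℕ) + 1 = j := by omega
      have h3 : ¬ (j : ℕ) + 1 = i := by omega
      rw [if_pos h1, if_pos h1, if_neg h2, if_neg h3, hd, h1]
      split_ifs <;> norm_num
    · by_cases h2 : (i : ℕ) + 1 = j
      · have h3 : ¬ (j : ℕ) + 1 = i := by omega
        have h4 : ((j : ℕ) : ℤ) = (i : ℕ) + 1 := by omega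
        rw [if_neg h1, if_neg h1, if_pos h2, if_neg h3, if_pos (Or.inl h2), h4]
        norm_num
      · by_cases h3 : (j : ℕ) + 1 = i
        · have h4 : ((j : ℕ) : ℤ) = (i : ℕ) - 1 := by omega
          rw [if_neg h1, if_neg h1, if_neg h2, if_pos h3, if_pos (Or.inr h3), h4]
          norm_num
        · rw [if_neg h1, if_neg h1, if_neg h2, if_neg h3, if_neg (by tauto)]
          norm_num
  have hi := i.isLt
  have hpred : ∑ j ∈ Finset.range (a + b + 1), (if j + 1 = (i : ℕ) then Y ((i : ℕ) - 1) else 0)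
      = Y ((i : ℕ) - 1) := by
    rcases Nat.eq_zero_or_pos (i : ℕ) with h0 | hpos
    · rw [h0]
      simp [hleft]
    · obtain ⟨k, hk⟩ := Nat.exists_eq_succ_of_ne_zero hpos.ne'
      rw [hk]
      simp only [Nat.succ_eq_add_one, add_left_inj]
      rw [Finset.sum_ite_eq', if_pos (Finset.mem_range.2 (by omega))]
  have hsucc : ∑ j ∈ Finset.range (a + b + 1), (if (i : ℕ) + 1 = j then Y ((i : ℕ) + 1) else 0)
      = Y ((i : ℕ) + 1) := by
    rw [Finset.sum_ite_eq]
    split_ifs with h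
    · rfl
    · have : ((i : ℕ) : ℤ) = a + b := by
        rw [Finset.mem_range] at h
        omega
      rw [this, hright]
  simp only [mulVec, dotProduct]
  rw [Finset.sum_congr rfl fun j _ => hterm j, Fin.sum_univ_eq_sum_range F,
    Finset.sum_sub_distrib, Finset.sum_sub_distrib, hpred, hsucc, Finset.sum_ite_eq,
    if_pos (Finset.mem_range.2 hi)]

lemma chainMatrix_neg_posDef (a b : ℕ) :
    ((-chainMatrix a b).map (Int.cast : ℤ → ℝ)).PosDef := by
  set Y : ℤ → ℝ := fun j => (j + 1) * (a + b + 1 - j) with hY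
  have hYpos : ∀ i : Fin (a + b + 1), 0 < Y (i : ℕ) := by
    intro i
    have : ((i : ℕ) : ℝ) < a + b + 1 := by exact_mod_cast i.isLt
    simp only [hY]
    push_cast
    exact mul_pos (by positivity) (by linarith)
  refine posDef_of_mulVec_pos (h := fun j => Y (j : ℕ)) ?_ (fun i j hij => ?_) hYpos fun i => ?_
  · ext i j
    simp [(chainMatrix_symm a b).apply i j]
  · simp only [map_apply, Matrix.neg_apply, chainMatrix, of_apply, if_neg hij]
    split_ifs <;> simp
  · rw [chainMatrix_mulVec (by simp [hY]) (by simp [hY])]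
    have h := hYpos i
    have h2 : 2 * Y (i : ℕ) - Y ((i : ℕ) - 1) - Y ((i : ℕ) + 1) = 2 := by
      simp only [hY]
      push_cast
      ring
    split_ifs <;> linarith

/-- The resolution datum of the chain with self-intersections `-2, …, -2, -3, -2, …, -2`. -/
def chainDatum (a b : ℕ) : ResolutionDatum (a + b + 1) where
  M := chainMatrix a b
  p := 0
  symm := chainMatrix_symm a b
  negdef x hx := by
    have h := quadratic_pos (chainMatrix_neg_posDef a b) hx
    have hneg : (-chainMatrix a b).map (Int.cast : ℤ → ℝ)
        = -((chainMatrix a b).map (Int.cast : ℤ → ℝ)) := by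
      ext i j
      simp
    rw [hneg, neg_mulVec, dotProduct_neg] at h
    linarith
  offdiag_nonneg i j hij := by
    simp only [chainMatrix, of_apply, if_neg hij]
    split_ifs <;> norm_num
  diag_le_neg_two i _ := by
    simp only [chainMatrix, of_apply, if_true]
    split_ifs <;> norm_num
  connected := by
    refine (SimpleGraph.pathGraph_connected (a + b)).mono fun i j hij => ?_
    have hne := hij.ne
    rw [SimpleGraph.pathGraph_adj] at hij
    rw [SimpleGraph.fromRel_adj]
    refine ⟨hne, Or.inl ?_⟩
    simp [chainMatrix, hne, hij]

lemma negK2_chainDatum (a b : ℕ) :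
    ((chainDatum a b).negK2 : ℝ)
      = ((a + 1) * (b + 1)) / ((a + 1) * (b + 1) + (a + 1) + (b + 1)) := by
  set t : ℝ := 1 / ((a + 1) * (b + 1) + (a + 1) + (b + 1)) with ht
  have ha : (0 : ℝ) < a + 1 := by positivity
  have hb : (0 : ℝ) < b + 1 := by positivity
  set Y : ℤ → ℝ := fun j => if j ≤ a then t * (j + 1) * (b + 1) else t * (a + 1) * (a + b + 1 - j)
    with hY
  have hle : ∀ j : ℤ, j ≤ a → Y j = t * (j + 1) * (b + 1) := fun j hj => by simp [hY, hj]
  have hge : ∀ j : ℤ, a ≤ j → Y j = t * (a + 1) * (a + b + 1 - j) := by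
    intro j hj
    rcases hj.eq_or_lt with rfl | hj
    · rw [hle _ le_rfl]
      push_cast
      ring
    · simp [hY, not_le.2 hj]
  have hc : (chainDatum a b).cReal
      = fun i : Fin (a + b + 1) => if (i : ℕ) = a then (1 : ℝ) else 0 := by
    ext i
    rw [ResolutionDatum.cReal_apply]
    simp only [chainDatum, chainMatrix, of_apply, if_true, Pi.zero_apply]
    split_ifs <;> norm_num
  have hsol : (chainDatum a b).form *ᵥ (fun j => Y (j : ℕ)) = (chainDatum a b).cReal := by
    ext i
    rw [hc]
    refine (chainMatrix_mulVec ?_ ?_ i).trans ?_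
    · rw [hle _ (by omega)]
      simp
    · rw [hge _ (by omega)]
      push_cast
      ring
    · beta_reduce
      rcases lt_trichotomy (i : ℕ) a with h | h | h
      · rw [if_neg h.ne, if_neg h.ne, hle _ (by omega), hle _ (by omega), hle _ (by omega)]
        push_cast
        ring
      · rw [if_pos h, if_pos h, hle _ (by omega), hle _ (by omega), hge _ (by omega), h, ht]
        push_cast
        field_simp
        ring
      · rw [if_neg h.ne', if_neg h.ne', hge _ (by omega), hge _ (by omega), hge _ (by omega)]
        push_cast
        ring
  rw [ResolutionDatum.negK2_eq_dotProduct _ hsol, hc]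
  have hva : a < a + b + 1 := by omega
  have hsingle : (fun i : Fin (a + b + 1) => if (i : ℕ) = a then (1 : ℝ) else 0)
      = Pi.single ⟨a, hva⟩ 1 := by
    ext i
    simp [Pi.single_apply, Fin.ext_iff]
  rw [hsingle, single_dotProduct, one_mul, hle _ le_rfl, ht]
  push_cast
  ring

lemma chain_mem_negK2Set {k l : ℕ} (hk : 0 < k) (hl : 0 < l) :
    (k * l : ℝ) / (k * l + k + l) ∈ negK2Set := by
  obtain ⟨a, rfl⟩ := Nat.exists_eq_succ_of_ne_zero hk.ne'
  obtain ⟨b, rfl⟩ := Nat.exists_eq_succ_of_ne_zero hl.ne'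
  refine ⟨a + b + 1, by omega, chainDatum a b, ?_⟩
  rw [negK2_chainDatum]
  push_cast
  rfl

end Chain

lemma abs_chain_value_sub_le {k l : ℕ} (hk : 0 < k) (hl : 0 < l) :
    |(k * l : ℝ) / (k * l + k + l) - k / (k + 1)| ≤ 1 / l := by
  have hk' : (0 : ℝ) < k := by exact_mod_cast hk
  have hl' : (0 : ℝ) < l := by exact_mod_cast hl
  have h : (k * l : ℝ) / (k * l + k + l) - k / (k + 1)
      = -(k ^ 2 / ((k + 1) * (k * l + k + l))) := by
    field_simp
    ring
  rw [h, abs_neg, abs_of_nonneg (by positivity), div_le_div_iff₀ (by positivity) hl']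
  nlinarith [mul_pos hk' hl', mul_pos (mul_pos hk' hk') hl', mul_pos hk' hk']

/-- Below `1`, the set `negK2Set` is locally finite away from the points `m / (m + 1)`. -/
lemma finite_negK2Set_inter {α : ℝ} (h1 : α < 1)
    (hα : ∀ m : ℕ, 0 < m → α ≠ (m : ℝ) / ((m : ℝ) + 1)) :
    ∃ ε : ℝ, 0 < ε ∧ (negK2Set ∩ {s | |s - α| < ε}).Finite := by
  have htend : Filter.Tendsto (fun m : ℕ => ((m + 1 : ℕ) : ℝ) / (((m + 1 : ℕ) : ℝ) + 1))
      Filter.atTop (nhds 1) :=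
    tendsto_natCast_div_add_atTop (1 : ℝ) |>.comp (Filter.tendsto_add_atTop_nat 1)
  have hclosed := htend.isCompact_insert_range.isClosed
  obtain ⟨η, hη, hball⟩ := Metric.isOpen_iff.1 hclosed.isOpen_compl α (by
    rintro (h | ⟨m, hm⟩)
    · exact h1.ne h
    · exact hα (m + 1) m.succ_pos hm.symm)
  have hfar : ∀ k : ℕ, 0 < k → η ≤ |(k : ℝ) / (k + 1) - α| := by
    intro k hk
    by_contra hlt
    obtain ⟨m, rfl⟩ := Nat.exists_eq_succ_of_ne_zero hk.ne'
    exact hball (Metric.mem_ball.2 (not_le.1 hlt)) (Or.inr ⟨m, rfl⟩)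
  set β : ℝ := (1 + α) / 2 with hβ
  have hβ1 : β < 1 := by
    rw [hβ]
    linarith
  set N : ℕ := Nat.factorial 16 with hN
  have hNpos : (0 : ℝ) < N := by
    rw [hN]
    exact_mod_cast Nat.factorial_pos 16
  obtain ⟨L, hL⟩ := exists_nat_gt (2 / η)
  obtain ⟨B, hB⟩ := exists_nat_gt (N * (1 / (1 - β)))
  have hfin : ((fun n : ℤ => (n / N : ℝ) / (1 + n / N)) '' Set.Icc 0 (B : ℤ) ∪
      (fun q : ℕ × ℕ => ((q.1 * q.2 : ℝ) / (q.1 * q.2 + q.1 + q.2))) ''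
        (Set.Iic L ×ˢ Set.Iic L)).Finite :=
    ((Set.finite_Icc _ _).image _).union (((Set.finite_Iic L).prod (Set.finite_Iic L)).image _)
  refine ⟨min (η / 2) ((1 - α) / 2), lt_min (by linarith) (by linarith), hfin.subset ?_⟩
  rintro s ⟨⟨r, -, D, hsD⟩, hs⟩
  rw [Set.mem_ofPred_eq] at hs
  have hs1 : |s - α| < η / 2 := lt_of_lt_of_le hs (min_le_left _ _)
  have hs2 : s < β := by
    have := (abs_lt.1 (lt_of_lt_of_le hs (min_le_right _ _))).2
    rw [hβ]
    linarith
  have hs0 : 0 ≤ s := hsD ▸ D.negK2_nonneg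
  have hcases := D.negK2_div_one_sub_negK2_cases (hsD ▸ hs2.trans hβ1)
  rw [← hsD] at hcases
  have hpos : 0 < 1 - s := by linarith
  rcases hcases with ⟨n, hn⟩ | ⟨k, l, hk, hl, hkl⟩
  · left
    have hg : s / (1 - s) = n / N := by
      rw [eq_div_iff hNpos.ne', mul_comm]
      exact hn
    refine ⟨n, ⟨?_, ?_⟩, ?_⟩
    · have : (0 : ℝ) ≤ n := by
        rw [← hn]
        positivity
      exact_mod_cast this
    · have hle : s / (1 - s) ≤ 1 / (1 - β) :=
        div_le_div₀ zero_le_one (by linarith) (by linarith) (by linarith)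
      have : (n : ℝ) ≤ B := by
        rw [← hn]
        exact (mul_le_mul_of_nonneg_left hle hNpos.le).trans hB.le
      exact_mod_cast this
    · simp only [← hg]
      field_simp
      ring
  · right
    have hval : ∀ k l : ℕ, 0 < k → 0 < l → (s / (1 - s) : ℝ) * (k + l) = k * l →
        s = (k * l : ℝ) / (k * l + k + l) ∧ l ≤ L := by
      intro k l hk hl hkl
      have hk' : (0 : ℝ) < k := by exact_mod_cast hk
      have hl' : (0 : ℝ) < l := by exact_mod_cast hl
      have hs : s = (k * l : ℝ) / (k * l + k + l) := by
        rw [div_mul_eq_mul_div, div_eq_iff hpos.ne'] at hkl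
        rw [eq_div_iff (by positivity)]
        linarith
      refine ⟨hs, ?_⟩
      have h2 := abs_chain_value_sub_le hk hl
      rw [← hs] at h2
      have h3 := hfar k hk
      have h4 : |(k : ℝ) / (k + 1) - α| ≤ |s - k / (k + 1)| + |s - α| := by
        rw [abs_sub_comm s (k / (k + 1) : ℝ)]
        exact abs_sub_le _ _ _
      have h5 : η / 2 < 1 / l := by linarith
      have h6 : (l : ℝ) < 2 / η := by
        rw [lt_div_iff₀ hl'] at h5
        rw [lt_div_iff₀ hη]
        linarith
      exact_mod_cast (h6.trans hL).le
    obtain ⟨hs, hlL⟩ := hval k l hk hl hkl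
    obtain ⟨-, hkL⟩ := hval l k hl hk (by rw [add_comm, hkl, mul_comm])
    exact ⟨(k, l), ⟨hkL, hlL⟩, hs.symm⟩

lemma not_accumulation_of_finite {S : Set ℝ} {α ε : ℝ} (hε : 0 < ε)
    (hfin : (S ∩ {s | |s - α| < ε}).Finite) :
    ¬ ∀ ε : ℝ, 0 < ε → ∃ s ∈ S, s ≠ α ∧ |s - α| < ε := by
  intro hacc
  have hopen : IsOpen ((S ∩ {s | |s - α| < ε}) \ {α})ᶜ :=
    (hfin.subset Set.sdiff_subset).isClosed.isOpen_compl
  obtain ⟨δ, hδ, hball⟩ := Metric.isOpen_iff.1 hopen α (by simp)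
  obtain ⟨s, hs, hne, hlt⟩ := hacc (min ε δ) (lt_min hε hδ)
  exact hball (Metric.mem_ball.2 (lt_of_lt_of_le hlt (min_le_right _ _)))
    ⟨⟨hs, lt_of_lt_of_le hlt (min_le_left _ _)⟩, hne⟩

/-- **Proposition 2.8.** The accumulation points of the set of values `-K²` in `[0,1]` are
exactly `1` and `m/(m+1)` for positive integers `m`. -/
theorem negK2Set_accumulation_in_unit_interval (α : ℝ) (h0 : 0 ≤ α) (h1 : α ≤ 1) :
    (∀ ε : ℝ, 0 < ε → ∃ s ∈ negK2Set, s ≠ α ∧ |s - α| < ε) ↔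
      (α = 1 ∨ ∃ m : ℕ, 0 < m ∧ α = (m : ℝ) / ((m : ℝ) + 1)) := by
  constructor
  · intro hacc
    by_contra hne
    push Not at hne
    obtain ⟨ε, hε, hfin⟩ := finite_negK2Set_inter (lt_of_le_of_ne h1 hne.1) hne.2
    exact not_accumulation_of_finite hε hfin hacc
  · rintro (rfl | ⟨m, hm, rfl⟩) ε hε
    · obtain ⟨k, hk⟩ := exists_nat_gt (2 / ε)
      have hk' : (0 : ℝ) < k := lt_trans (by positivity) hk
      have hk0 : 0 < k := by exact_mod_cast hk'
      refine ⟨_, chain_mem_negK2Set hk0 hk0, ?_⟩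
      have h : (k * k : ℝ) / (k * k + k + k) - 1 = -(2 / (k + 2)) := by
        field_simp
        ring
      have hpos : (0 : ℝ) < 2 / (k + 2) := by positivity
      refine ⟨fun h' => by linarith, ?_⟩
      rw [h, abs_neg, abs_of_pos hpos, div_lt_iff₀ (by positivity)]
      rw [div_lt_iff₀ hε] at hk
      nlinarith
    · obtain ⟨l, hl⟩ := exists_nat_gt (1 / ε)
      have hl' : (0 : ℝ) < l := lt_trans (by positivity) hl
      have hl0 : 0 < l := by exact_mod_cast hl'
      have hm' : (0 : ℝ) < m := by exact_mod_cast hm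
      refine ⟨_, chain_mem_negK2Set hm hl0, ?_, ?_⟩
      · rw [Ne, div_eq_div_iff (by positivity) (by positivity)]
        intro h
        nlinarith
      · refine (abs_chain_value_sub_le hm hl0).trans_lt ?_
        rw [div_lt_iff₀ hl']
        rw [div_lt_iff₀ hε] at hl
        linarith
end

section
/- Let (M, p) be a resolution datum of size r with -cᵀ M⁻¹ c < 1. Let Z : Fin r → ℤ be a nonzero vector with Z i ≥ 0 for all i, and assume 2 + Zᵀ M Z + cᵀ Z ≥ 0 (i.e., the arithmetic genus p_a(Z) = 1 + (ZᵀMZ + cᵀZ)/2 is nonnegative, as holds for the fundamental cycle). Then Zᵀ M Z + cᵀ Z = -2, and cᵀ Z = 0 or cᵀ Z = 1 (equivalently, Zᵀ M Z = -2 or Zᵀ M Z = -3). -/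
open Matrix

/-- The integer vector `c i = 2 p i - 2 - M i i`. -/
def ResolutionDatum.cInt {r : ℕ} (D : ResolutionDatum r) : Fin r → ℤ :=
  fun i => 2 * (D.p i : ℤ) - 2 - D.M i i

/-- A symmetric integer quadratic form agrees modulo two with its diagonal part. -/
theorem Matrix.IsSymm.even_dotProduct_mulVec_sub {ι : Type*} [Fintype ι]
    {A : Matrix ι ι ℤ} (hA : A.IsSymm) (x : ι → ℤ) :
    Even (x ⬝ᵥ (A *ᵥ x) - ∑ i, A i i * x i) := by
  classical
  have two_zero : (2 : ZMod 2) = 0 := by decide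
  have mul_self : ∀ a : ZMod 2, a * a = a := by decide
  have hsum : ∑ q : ι × ι, ((x q.1 * (A q.1 q.2 * x q.2) -
      if q.1 = q.2 then A q.1 q.1 * x q.1 else 0 : ℤ) : ZMod 2) = 0 := by
    refine Finset.sum_involution (fun q _ => q.swap) ?_ ?_ (by simp) (by simp)
    · rintro ⟨i, j⟩ -
      by_cases hij : i = j
      · subst hij
        simp only [Prod.swap]
        push_cast
        linear_combination (x i * (A i i * x i) - A i i * x i : ZMod 2) * two_zero
      · simp only [Prod.swap, hij, Ne.symm hij, if_false, hA.apply i j]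
        push_cast
        linear_combination (x i * (A i j * x j) : ZMod 2) * two_zero
    · rintro ⟨i, j⟩ - hne heq
      obtain rfl : j = i := congrArg Prod.fst heq
      apply hne
      simp only [if_true]
      push_cast
      linear_combination (A j j : ZMod 2) * mul_self (x j)
  rw [← Int.cast_sum, ZMod.intCast_eq_zero_iff_even, Fintype.sum_prod_type] at hsum
  simpa [dotProduct, mulVec, Finset.mul_sum, Finset.sum_sub_distrib] using hsum

namespace ResolutionDatum

variable {r : ℕ} (D : ResolutionDatum r)

theorem dotProduct_mulVec_neg {x : Fin r → ℚ} (hx : x ≠ 0) :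
    x ⬝ᵥ (D.M.map (Int.cast : ℤ → ℚ) *ᵥ x) < 0 := by
  have h := D.negdef (fun i => (x i : ℝ)) fun h => hx <| funext fun i => by
    simpa using congrFun h i
  simp only [dotProduct, mulVec, Matrix.map_apply] at h ⊢
  exact_mod_cast h

theorem dotProduct_mulVec_nonpos (x : Fin r → ℚ) :
    x ⬝ᵥ (D.M.map (Int.cast : ℤ → ℚ) *ᵥ x) ≤ 0 := by
  rcases eq_or_ne x 0 with rfl | hx
  · simp
  · exact (D.dotProduct_mulVec_neg hx).le

theorem isUnit_det : IsUnit (D.M.map (Int.cast : ℤ → ℚ)).det := by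
  rw [isUnit_iff_ne_zero]
  intro h
  obtain ⟨v, hv, hMv⟩ := Matrix.exists_mulVec_eq_zero_iff.mpr h
  simpa [hMv] using D.dotProduct_mulVec_neg hv

/-- The Cauchy–Schwarz inequality `(K · x)² ≤ K² x²`. -/
theorem sq_dotProduct_le {x : Fin r → ℚ} (hx : x ≠ 0) :
    (D.c ⬝ᵥ x) ^ 2 ≤ D.negK2 * -(x ⬝ᵥ (D.M.map (Int.cast : ℤ → ℚ) *ᵥ x)) := by
  have hneg := D.dotProduct_mulVec_neg hx
  unfold negK2
  set A := D.M.map (Int.cast : ℤ → ℚ) with hA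
  set w := A⁻¹ *ᵥ D.c with hw
  have hAw : A *ᵥ w = D.c := by
    rw [hw, mulVec_mulVec, mul_nonsing_inv _ D.isUnit_det, one_mulVec]
  have hAt : Aᵀ = A := D.symm.map _
  have hwx : w ⬝ᵥ (A *ᵥ x) = D.c ⬝ᵥ x := by
    rw [dotProduct_mulVec, ← mulVec_transpose, hAt, hAw]
  have h := D.dotProduct_mulVec_nonpos ((-(x ⬝ᵥ (A *ᵥ x))) • w + (D.c ⬝ᵥ x) • x)
  rw [← hA] at h
  simp only [mulVec_add, mulVec_smul, dotProduct_add, add_dotProduct, smul_dotProduct,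
    dotProduct_smul, hAw, hwx, smul_eq_mul, dotProduct_comm x D.c, dotProduct_comm w D.c] at h
  nlinarith

theorem even_sq_add_canonical (Z : Fin r → ℤ) : Even (Z ⬝ᵥ (D.M *ᵥ Z) + D.cInt ⬝ᵥ Z) := by
  have hc : D.cInt ⬝ᵥ Z = 2 * ∑ i, ((D.p i : ℤ) - 1) * Z i - ∑ i, D.M i i * Z i := by
    simp only [dotProduct, cInt, Finset.mul_sum, ← Finset.sum_sub_distrib]
    exact Finset.sum_congr rfl fun i _ => by ring
  have h := (D.symm.even_dotProduct_mulVec_sub Z).add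
    (even_two_mul (∑ i, ((D.p i : ℤ) - 1) * Z i))
  rwa [sub_add_eq_add_sub, add_sub_assoc, ← hc] at h

/-- If `-K² < 1`, then `(K · Z)² < -Z²` for every nonzero cycle `Z`. -/
theorem sq_canonical_lt (hK : D.negK2 < 1) {Z : Fin r → ℤ} (hZ : Z ≠ 0) :
    (D.cInt ⬝ᵥ Z) ^ 2 < -(Z ⬝ᵥ (D.M *ᵥ Z)) := by
  have hx : (fun i => (Z i : ℚ)) ≠ 0 := fun h => hZ <| funext fun i => by
    simpa using congrFun h i
  have hlt : (D.c ⬝ᵥ fun i => (Z i : ℚ)) ^ 2 <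
      -((fun i => (Z i : ℚ)) ⬝ᵥ (D.M.map (Int.cast : ℤ → ℚ) *ᵥ fun i => (Z i : ℚ))) := by
    nlinarith [D.sq_dotProduct_le hx, D.dotProduct_mulVec_neg hx]
  simp only [dotProduct, mulVec, Matrix.map_apply, c] at hlt
  simp only [dotProduct, mulVec, cInt]
  exact_mod_cast hlt

end ResolutionDatum

/-- **Key claim in the proof of Proposition 2.8.** If `-K² < 1` and `Z` is a nonzero effective
cycle of nonnegative arithmetic genus (e.g. the fundamental cycle), then
`Z² + K·Z = -2` and `K·Z ∈ {0, 1}`. -/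
theorem fundamental_cycle_of_negK2_lt_one (r : ℕ) (hr : 0 < r) (D : ResolutionDatum r)
    (hK : D.negK2 < 1)
    (Z : Fin r → ℤ) (hZne : Z ≠ 0) (hZnonneg : ∀ i, 0 ≤ Z i)
    (hpa : 0 ≤ 2 + Z ⬝ᵥ (D.M *ᵥ Z) + D.cInt ⬝ᵥ Z) :
    Z ⬝ᵥ (D.M *ᵥ Z) + D.cInt ⬝ᵥ Z = -2 ∧ (D.cInt ⬝ᵥ Z = 0 ∨ D.cInt ⬝ᵥ Z = 1) := by
  have hlt := D.sq_canonical_lt hK hZne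
  obtain ⟨m, hm⟩ := D.even_sq_add_canonical Z
  generalize D.cInt ⬝ᵥ Z = k at *
  generalize Z ⬝ᵥ (D.M *ᵥ Z) = n at *
  have hk_lower : -1 < k := by nlinarith
  have hk_upper : k < 2 := by nlinarith
  obtain rfl | rfl : k = 0 ∨ k = 1 := by omega
  all_goals omega
end

section
/- Let (M, p) be a resolution datum of size r, with c i = 2·(p i) - 2 - M i i. Then for every nonzero vector d : Fin r → ℤ with d i ≥ 0 for all i, one has -cᵀ M⁻¹ c ≥ 2·dᵀ M d + 2·cᵀ d + 1; that is, -cᵀ M⁻¹ c ≥ 4·p_a(d) - 3 where p_a(d) = 1 + (dᵀ M d + cᵀ d)/2. -/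
open Matrix

theorem ResolutionDatum.dotProduct_mulVec_neg_s17 {r : ℕ} (D : ResolutionDatum r) {x : Fin r → ℚ}
    (hx : x ≠ 0) : x ⬝ᵥ ((D.M.map (Int.cast : ℤ → ℚ)) *ᵥ x) < 0 := by
  have hne : (fun i => (x i : ℝ)) ≠ 0 := fun h =>
    hx (funext fun i => by simpa using congrFun h i)
  have h := D.negdef _ hne
  simp only [dotProduct, mulVec, map_apply] at h ⊢
  exact_mod_cast h

theorem ResolutionDatum.dotProduct_mulVec_nonpos_s17 {r : ℕ} (D : ResolutionDatum r)
    (x : Fin r → ℚ) : x ⬝ᵥ ((D.M.map (Int.cast : ℤ → ℚ)) *ᵥ x) ≤ 0 := by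
  by_cases hx : x = 0
  · simp [hx]
  · exact (D.dotProduct_mulVec_neg_s17 hx).le

theorem ResolutionDatum.isUnit_det_s17 {r : ℕ} (D : ResolutionDatum r) :
    IsUnit (D.M.map (Int.cast : ℤ → ℚ)).det := by
  rw [isUnit_iff_ne_zero]
  intro h
  obtain ⟨v, hv, hv0⟩ := exists_mulVec_eq_zero_iff.mpr h
  simpa [hv0] using D.dotProduct_mulVec_neg_s17 hv

/-- `(K + D)² ≤ 0`, rewritten as a lower bound for `-K²`. -/
theorem ResolutionDatum.two_mul_add_le_negK2 {r : ℕ} (D : ResolutionDatum r) (x : Fin r → ℚ) :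
    2 * (D.c ⬝ᵥ x) + x ⬝ᵥ ((D.M.map (Int.cast : ℤ → ℚ)) *ᵥ x) ≤ D.negK2 := by
  unfold ResolutionDatum.negK2
  set A := D.M.map (Int.cast : ℤ → ℚ) with hA
  set k := A⁻¹ *ᵥ D.c with hk
  have hAk : A *ᵥ k = D.c := by
    rw [hk, mulVec_mulVec, mul_nonsing_inv _ D.isUnit_det_s17, one_mulVec]
  have hsymm : Aᵀ = A := (D.symm.map _)
  have hkx : k ⬝ᵥ (A *ᵥ x) = D.c ⬝ᵥ x := by
    rw [dotProduct_mulVec, ← mulVec_transpose, hsymm, hAk]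
  have h := D.dotProduct_mulVec_nonpos_s17 (k + x)
  rw [← hA, mulVec_add, hAk, add_dotProduct, dotProduct_add, dotProduct_add, hkx,
    dotProduct_comm k, dotProduct_comm x D.c] at h
  linarith

/-- **Theorem 3.4.** `-K² ≥ 4 p_a(D) - 3` for every nonzero effective cycle `D`, i.e.
`-cᵀ M⁻¹ c ≥ 2 dᵀ M d + 2 cᵀ d + 1`. -/
theorem negK2_ge_four_pa_sub_three (r : ℕ) (hr : 0 < r) (D : ResolutionDatum r)
    (d : Fin r → ℤ) (hdne : d ≠ 0) (hdnonneg : ∀ i, 0 ≤ d i) :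
    ((2 * (d ⬝ᵥ (D.M *ᵥ d)) + 2 * (D.cInt ⬝ᵥ d) + 1 : ℤ) : ℚ) ≤ D.negK2 := by
  have hne : (fun i => (d i : ℚ)) ≠ 0 := fun h =>
    hdne (funext fun i => by simpa using congrFun h i)
  have hself : (fun i => (d i : ℚ)) ⬝ᵥ ((D.M.map (Int.cast : ℤ → ℚ)) *ᵥ fun i => (d i : ℚ))
      = ((d ⬝ᵥ (D.M *ᵥ d) : ℤ) : ℚ) := by
    simp [dotProduct, mulVec]
  have hc : D.c ⬝ᵥ (fun i => (d i : ℚ)) = ((D.cInt ⬝ᵥ d : ℤ) : ℚ) := by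
    simp [dotProduct, ResolutionDatum.c, ResolutionDatum.cInt]
  have hneg := D.dotProduct_mulVec_neg_s17 hne
  have hle := D.two_mul_add_le_negK2 fun i => (d i : ℚ)
  rw [hself] at hneg hle
  rw [hc] at hle
  have hint : d ⬝ᵥ (D.M *ᵥ d) + 1 ≤ 0 := by exact_mod_cast hneg
  have hrat : ((d ⬝ᵥ (D.M *ᵥ d) : ℤ) : ℚ) + 1 ≤ 0 := by exact_mod_cast hint
  push_cast
  linarith
end
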